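/- Let A, B be 6×6 complex matrices with rank(A : B) = 6 (the 6×12 block matrix formed by A and B side by side) and A C₆ A* = B C₆ B*, where C₆ = ((-1)^r δ_{r,7-s})_{r,s=1}^6. Then 3 ≤ rank A ≤ 6 and 3 ≤ rank B ≤ 6. -/

import Mathlib

open Matrix

/-- The 6×6 symplectic matrix `C₆ = ((-1)^r δ_{r,7-s})_{r,s=1}^6`, 0-based indices. -/
def C6 : Matrix (Fin 6) (Fin 6) ℂ :=
  Matrix.of fun r s => (-1 : ℂ) ^ ((r : ℕ) + 1) * (if (r : ℕ) + (s : ℕ) = 5 then 1 else 0)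

lemma C6_sq : C6 * C6 = -1 := by
  ext i j
  fin_cases i <;> fin_cases j <;> simp [C6, Matrix.mul_apply, Fin.sum_univ_succ]
    <;> norm_num

lemma ker_dim (A : Matrix (Fin 6) (Fin 6) ℂ) :
    A.rank + Module.finrank ℂ (LinearMap.ker A.mulVecLin) = 6 := by
  have := LinearMap.finrank_range_add_finrank_ker A.mulVecLin
  simpa [Matrix.rank] using this

open scoped ComplexOrder in
lemma ker_dim' (A : Matrix (Fin 6) (Fin 6) ℂ) :
    A.rank + Module.finrank ℂ (LinearMap.ker Aᴴ.mulVecLin) = 6 := by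
  have := ker_dim Aᴴ
  rwa [Matrix.rank_conjTranspose] at this

open scoped ComplexOrder in
lemma inj_aux (A B : Matrix (Fin 6) (Fin 6) ℂ)
    (hrank : (Matrix.of fun i => Sum.elim (A i) (B i) :
        Matrix (Fin 6) (Fin 6 ⊕ Fin 6) ℂ).rank = 6) (x : Fin 6 → ℂ)
    (ha : Aᴴ *ᵥ x = 0) (hb : Bᴴ *ᵥ x = 0) : x = 0 := by
  set M : Matrix (Fin 6) (Fin 6 ⊕ Fin 6) ℂ := Matrix.of fun i => Sum.elim (A i) (B i) with hM
  have h1 : Mᴴ.rank = 6 := by rw [Matrix.rank_conjTranspose, hrank]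
  have h2 := LinearMap.finrank_range_add_finrank_ker Mᴴ.mulVecLin
  rw [Matrix.rank] at h1
  rw [h1] at h2
  have h3 : Module.finrank ℂ (LinearMap.ker Mᴴ.mulVecLin) = 0 := by simpa using h2
  have h4 := Submodule.finrank_eq_zero.mp h3
  have h5 : x ∈ LinearMap.ker Mᴴ.mulVecLin := by
    rw [LinearMap.mem_ker, Matrix.mulVecLin_apply]
    funext i
    rcases i with i | i
    · exact congrFun ha i
    · exact congrFun hb i
  rw [h4] at h5
  simpa using h5

lemma rank_le_aux (A B : Matrix (Fin 6) (Fin 6) ℂ)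
    (hinj : ∀ x : Fin 6 → ℂ, Aᴴ *ᵥ x = 0 → Bᴴ *ᵥ x = 0 → x = 0)
    (hsa : A * C6 * Aᴴ = B * C6 * Bᴴ) : B.rank ≤ A.rank ∧ 6 ≤ A.rank + B.rank := by
  have hA := ker_dim' A
  have hB := ker_dim' B
  have hB2 := ker_dim B
  constructor
  · have hmem : ∀ x : LinearMap.ker Aᴴ.mulVecLin,
        (C6 * Bᴴ).mulVecLin x ∈ LinearMap.ker B.mulVecLin := by
      rintro ⟨x, hx⟩
      have hx' : Aᴴ *ᵥ x = 0 := hx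
      rw [LinearMap.mem_ker, Matrix.mulVecLin_apply, Matrix.mulVecLin_apply,
        Matrix.mulVec_mulVec, ← Matrix.mul_assoc, ← hsa, ← Matrix.mulVec_mulVec, hx',
        Matrix.mulVec_zero]
    let f := LinearMap.codRestrict (LinearMap.ker B.mulVecLin)
      ((C6 * Bᴴ).mulVecLin.comp (LinearMap.ker Aᴴ.mulVecLin).subtype) hmem
    have hf : Function.Injective f := by
      rw [← LinearMap.ker_eq_bot, LinearMap.ker_eq_bot']
      rintro ⟨x, hx⟩ h
      have h' : (C6 * Bᴴ) *ᵥ x = 0 := congrArg Subtype.val h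
      have h2 : C6 *ᵥ ((C6 * Bᴴ) *ᵥ x) = 0 := by rw [h', Matrix.mulVec_zero]
      rw [Matrix.mulVec_mulVec, ← Matrix.mul_assoc, C6_sq, neg_one_mul, Matrix.neg_mulVec,
        neg_eq_zero] at h2
      exact Subtype.ext (hinj x hx h2)
    have := LinearMap.finrank_le_finrank_of_injective hf
    omega
  · have hbot : LinearMap.ker Aᴴ.mulVecLin ⊓ LinearMap.ker Bᴴ.mulVecLin = ⊥ := by
      rw [eq_bot_iff]
      rintro x ⟨h1, h2⟩
      exact hinj x h1 h2
    have h := Submodule.finrank_sup_add_finrank_inf_eq (LinearMap.ker Aᴴ.mulVecLin)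
      (LinearMap.ker Bᴴ.mulVecLin)
    have h2 := Submodule.finrank_le (LinearMap.ker Aᴴ.mulVecLin ⊔ LinearMap.ker Bᴴ.mulVecLin)
    rw [hbot, finrank_bot] at h
    rw [Module.finrank_fin_fun] at h2
    omega

theorem rank_bounds (A B : Matrix (Fin 6) (Fin 6) ℂ)
    (hrank : (Matrix.of fun i => Sum.elim (A i) (B i) :
        Matrix (Fin 6) (Fin 6 ⊕ Fin 6) ℂ).rank = 6)
    (hsa : A * C6 * Aᴴ = B * C6 * Bᴴ) :
    (3 ≤ A.rank ∧ A.rank ≤ 6) ∧ (3 ≤ B.rank ∧ B.rank ≤ 6) := by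
  have hinj := inj_aux A B hrank
  have h1 := rank_le_aux A B hinj hsa
  have h2 := rank_le_aux B A (fun x hb ha => hinj x ha hb) hsa.symm
  have h3 := Matrix.rank_le_width A
  have h4 := Matrix.rank_le_width B
  omega
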